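/- arXiv:1904.04524 — 2 statements merged into one kernel-verified Lean document; each statement's English description precedes it below -/
import Mathlib

section
/- Improved decay on the right and integrated bounds: there is an absolute constant C such that for every t > 0 and every real-valued tempered distribution u whose profile ũ(p) = e^{−itp³} û(p) satisfies ũ ∈ L^∞(ℝ) and ∂_p ũ ∈ L²((0, ∞)): (i) ‖u‖_{L⁶(ℝ)}³ ≤ C t^{−5/6} ‖u‖_{E(t)}³; (ii) ‖u ∂ₓ u‖_{L^∞(ℝ)} ≤ C t^{−1} ‖u‖_{E(t)}²; and (iii) for x > t^{1/3}, |u(x)| ≤ C t^{−1/3} ⟨x/t^{1/3}⟩^{−3/4} ‖u‖_{E(t)} and |∂ₓ u(x)| ≤ C t^{−2/3} ⟨x/t^{1/3}⟩^{−1/4} ‖u‖_{E(t)}. -/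
open MeasureTheory Set Filter Topology

noncomputable section

namespace MKdVPaper

/-- The Japanese bracket `⟨y⟩ = √(1+y²)`. -/
def jap (y : ℝ) : ℝ := Real.sqrt (1 + y ^ 2)

/-- Truncated Fourier-type integral recovering the physical function from a profile `w`:
`(1/π) Re ∫_0^R e^{i(px + p³ t)} w(p) dp`. -/
def physPartial (w : ℝ → ℂ) (t x R : ℝ) : ℝ :=
  (1 / Real.pi) *
    (∫ p in Ioc (0 : ℝ) R, Complex.exp (Complex.I * ((p * x + p ^ 3 * t : ℝ) : ℂ)) * w p).re

/-- `u` is the physical-space function associated with the profile `w` at time `t`, i.e.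
`u(x) = (1/π) Re ∫_0^∞ e^{i(px + p³t)} w(p) dp` as an improper integral. -/
def IsPhys (w : ℝ → ℂ) (t : ℝ) (u : ℝ → ℝ) : Prop :=
  ∀ x : ℝ, Tendsto (fun R => physPartial w t x R) atTop (𝓝 (u x))

/-- Sup norm of a profile. -/
def supN (w : ℝ → ℂ) : ℝ := ⨆ p : ℝ, ‖w p‖

/-- `L²((0,∞))` norm of the derivative of the profile. -/
def dL2 (w : ℝ → ℂ) : ℝ := (eLpNorm (deriv w) 2 (volume.restrict (Ioi 0))).toReal

/-- The `E(t)` norm: `‖ũ‖_{L^∞} + t^{-1/6} ‖∂_p ũ‖_{L²((0,∞))}`. -/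
def EnormP (t : ℝ) (w : ℝ → ℂ) : ℝ := supN w + t ^ (-(1 / 6 : ℝ)) * dL2 w

/-- Membership conditions for `E(t)` on the profile side: profile of a real-valued
distribution, bounded and continuous on `(0,∞)`, with derivative in `L²((0,∞))`. -/
structure MemE (w : ℝ → ℂ) : Prop where
  symm : ∀ p : ℝ, w (-p) = starRingEnd ℂ (w p)
  cont : ContinuousOn w (Ioi 0)
  bdd : BddAbove (range fun p : ℝ => ‖w p‖)
  diff : ∀ p ∈ Ioi (0 : ℝ), DifferentiableAt ℝ w p
  derivL2 : MemLp (deriv w) 2 (volume.restrict (Ioi 0))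

/-- A space-time function of class `E(I)`: a physical function `u` together with its
profile `w(t,p) = e^{-itp³} û(t,p)`. -/
structure ESol (I : Set ℝ) where
  u : ℝ → ℝ → ℝ
  w : ℝ → ℝ → ℂ
  memE : ∀ t ∈ I, MemE (w t)
  isPhys : ∀ t ∈ I, IsPhys (w t) t (u t)
  contt : ContinuousOn (fun q : ℝ × ℝ => w q.1 q.2) (I ×ˢ Ioi 0)

/-- Finiteness of the `E(I)` norm: `sup_{t ∈ I} ‖u(t)‖_{E(t)} < ∞`. -/
def FiniteEnorm (I : Set ℝ) (sol : ESol I) : Prop :=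
  BddAbove ((fun t => EnormP t (sol.w t)) '' I)

/-- Time derivative of a test function. -/
def dt1 (φ : ℝ → ℝ → ℝ) : ℝ → ℝ → ℝ := fun t x => deriv (fun s => φ s x) t

/-- Space derivative of a test function. -/
def dx1 (φ : ℝ → ℝ → ℝ) : ℝ → ℝ → ℝ := fun t x => deriv (fun y => φ t y) x

/-- `u` is a distributional solution of `∂ₜ u + ∂ₓ³ u + ε ∂ₓ(u³) = 0` on `I × ℝ`. -/
def IsSolOn (ε : ℝ) (u : ℝ → ℝ → ℝ) (I : Set ℝ) : Prop :=
  ∀ φ : ℝ → ℝ → ℝ,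
    ContDiff ℝ (⊤ : ℕ∞) (fun q : ℝ × ℝ => φ q.1 q.2) →
    HasCompactSupport (fun q : ℝ × ℝ => φ q.1 q.2) →
    tsupport (fun q : ℝ × ℝ => φ q.1 q.2) ⊆ interior I ×ˢ univ →
    (∫ q : ℝ × ℝ,
      (u q.1 q.2 * (dt1 φ q.1 q.2 + dx1 (dx1 (dx1 φ)) q.1 q.2)
        + ε * u q.1 q.2 ^ 3 * dx1 φ q.1 q.2)) = 0

/-- Self-similar solution: `S(t,x) = t^{-1/3} V(t^{-1/3} x)`. -/
def SelfSimilar {I : Set ℝ} (S : ESol I) : Prop :=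
  ∃ V : ℝ → ℝ, ∀ t ∈ I, ∀ x : ℝ,
    S.u t x = t ^ (-(1 / 3 : ℝ)) * V (t ^ (-(1 / 3 : ℝ)) * x)

/-- The Fourier transform at time 1 recovered from the profile: `û(1,p) = e^{ip³} ũ(1,p)`. -/
def hatAtOne (w : ℝ → ℂ) : ℝ → ℂ := fun p => Complex.exp (Complex.I * ((p ^ 3 : ℝ) : ℂ)) * w p

/-- The Fourier transforms at time 1 have the same limit at frequency `0⁺`. -/
def SameZeroLimit (w₁ w₂ : ℝ → ℂ) : Prop :=
  ∃ c : ℂ, Tendsto (hatAtOne w₁) (𝓝[>] (0 : ℝ)) (𝓝 c) ∧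
    Tendsto (hatAtOne w₂) (𝓝[>] (0 : ℝ)) (𝓝 c)

/-- Truncated Airy–Fock integral. -/
def AiP (z R : ℝ) : ℂ :=
  ((1 / Real.pi : ℝ) : ℂ) *
    ∫ p in Ioc (0 : ℝ) R, Complex.exp (Complex.I * ((p * z + p ^ 3 : ℝ) : ℂ))

/-- The Airy–Fock function `Ai(z) = (1/π)∫_0^∞ e^{i(pz+p³)} dp` (improper integral). -/
def AiFock (z : ℝ) : ℂ := limUnder atTop fun R => AiP z R

end MKdVPaper

/-!
Put `h = t^{-1/3}` and `y = h x`. The phase `px + p³t` has derivative `x + 3tp²`. If `y ≤ 1`, this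
is at least a multiple of `t |p - s| (p + k)` with `k = h ⟨y⟩^{1/2}`, provided that `p` is at
distance at least `d = 2h ⟨y⟩^{-1/4}` from an approximate stationary point `s` of size `k`. If
`y ≥ 1`, there is no stationary point and the same lower bound holds for all `p ≥ 0` with `s = -k`
and `d = k`. An amplitude `A` (`A = 1` for `u`, `A = p` for `∂ₓ u`) divided by `x + 3tp²` therefore
behaves like a multiple of `1 / (p - s)`. A single integration by parts, with Cauchy–Schwarz against
`∂_p ũ`, bounds the integral over `|p - s| ≥ d` by `(t d)⁻¹ (‖ũ‖_∞ + d^{1/2} ‖∂_p ũ‖_{L²})`, with an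
additional factor `k⁻¹` when `A = 1`. The interval `|p - s| < d`, which is only present for `y ≤ 1`,
is estimated trivially. The larger `d` available for `y ≥ 1` is the improved decay on the right.
The `L⁶` bound follows from `|u(x)| ≲ h ⟨y⟩^{-1/4} ‖u‖_{E(t)}`, as `⟨y⟩^{-3/2}` is integrable.
-/

namespace MKdVPaper

section OscillatoryIntegrals

variable {a b d s : ℝ}

theorem norm_integral_cexp_mul_le {φ φ' : ℝ → ℝ} {f : ℝ → ℂ} (hab : a ≤ b)
    (hφ : ∀ p ∈ Icc a b, HasDerivAt φ (φ' p) p) (hφ' : ContinuousOn φ' (Icc a b))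
    (hf : ∀ p ∈ Icc a b, DifferentiableAt ℝ f p)
    (hf' : IntervalIntegrable (deriv f) volume a b) :
    ‖∫ p in a..b, Complex.exp (Complex.I * φ p) * (φ' p * f p)‖ ≤
      ‖f a‖ + ‖f b‖ + ∫ p in a..b, ‖deriv f p‖ := by
  rw [← uIcc_of_le hab] at hφ hφ' hf
  let e : ℝ → ℂ := fun p => Complex.exp (Complex.I * φ p)
  have norm_e : ∀ p, ‖e p‖ = 1 := fun p => by simp [e, mul_comm Complex.I]
  have he : ∀ p ∈ uIcc a b, HasDerivAt e (e p * (Complex.I * φ' p)) p := fun p hp =>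
    ((hφ p hp).ofReal_comp.const_mul Complex.I).cexp
  have he_cont : ContinuousOn e (uIcc a b) := fun p hp => (he p hp).continuousAt.continuousWithinAt
  have he' : IntervalIntegrable (fun p => e p * (Complex.I * φ' p)) volume a b :=
    (he_cont.mul (continuousOn_const.mul
      (Complex.continuous_ofReal.comp_continuousOn hφ'))).intervalIntegrable
  have by_parts := intervalIntegral.integral_mul_deriv_eq_deriv_mul
    (fun p hp => (hf p hp).hasDerivAt) he hf' he'
  have boundary : ∀ p, ‖f p * e p‖ = ‖f p‖ := fun p => by rw [norm_mul, norm_e, mul_one]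
  have remainder : ‖∫ p in a..b, deriv f p * e p‖ ≤ ∫ p in a..b, ‖deriv f p‖ := by
    refine (intervalIntegral.norm_integral_le_integral_norm hab).trans_eq ?_
    simp only [norm_mul, norm_e, mul_one]
  calc ‖∫ p in a..b, e p * (φ' p * f p)‖
      = ‖Complex.I * ∫ p in a..b, e p * (φ' p * f p)‖ := by simp
    _ = ‖∫ p in a..b, f p * (e p * (Complex.I * φ' p))‖ := by
        rw [← intervalIntegral.integral_const_mul]
        congr 2 with p
        ring
    _ ≤ ‖f a‖ + ‖f b‖ + ∫ p in a..b, ‖deriv f p‖ := by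
        rw [by_parts]
        refine (norm_sub_le _ _).trans (add_le_add ((norm_sub_le _ _).trans_eq ?_) remainder)
        rw [boundary, boundary, add_comm]

theorem le_abs_sub_of_separated (hs : s + d ≤ a ∨ b + d ≤ s) {p : ℝ} (hp : p ∈ Icc a b) :
    d ≤ |p - s| := by
  rcases hs with hs | hs
  · exact le_abs.2 (.inl (by linarith [hp.1]))
  · exact le_abs.2 (.inr (by linarith [hp.2]))

theorem intervalIntegrable_inv_sq_sub (hab : a ≤ b) (hd : 0 < d) (hs : s + d ≤ a ∨ b + d ≤ s) :
    IntervalIntegrable (fun p => ((p - s) ^ 2)⁻¹) volume a b := by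
  refine (ContinuousOn.inv₀ (by fun_prop) fun p hp => ?_).intervalIntegrable
  rw [uIcc_of_le hab] at hp
  exact pow_ne_zero 2 (abs_pos.1 (hd.trans_le (le_abs_sub_of_separated hs hp)))

theorem integral_inv_sq_sub_le (hab : a ≤ b) (hd : 0 < d) (hs : s + d ≤ a ∨ b + d ≤ s) :
    ∫ p in a..b, ((p - s) ^ 2)⁻¹ ≤ d⁻¹ := by
  have hne : ∀ p ∈ uIcc a b, p - s ≠ 0 := fun p hp =>
    abs_pos.1 (hd.trans_le (le_abs_sub_of_separated hs (uIcc_of_le hab ▸ hp)))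
  have hderiv : ∀ p ∈ uIcc a b, HasDerivAt (fun p => -(p - s)⁻¹) ((p - s) ^ 2)⁻¹ p := fun p hp => by
    simpa [neg_div] using (((hasDerivAt_id p).sub_const s).fun_inv (hne p hp)).fun_neg
  rw [intervalIntegral.integral_eq_sub_of_hasDerivAt hderiv
    (intervalIntegrable_inv_sq_sub hab hd hs)]
  rcases hs with hs | hs
  · have ha : (a - s)⁻¹ ≤ d⁻¹ := inv_anti₀ hd (by linarith)
    have hb : 0 ≤ (b - s)⁻¹ := inv_nonneg.2 (by linarith)
    linarith
  · have ha : (a - s)⁻¹ ≤ 0 := inv_nonpos.2 (by linarith)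
    have hb : (s - b)⁻¹ ≤ d⁻¹ := inv_anti₀ hd (by linarith)
    rw [← neg_sub s b, inv_neg]
    linarith

theorem integral_mul_norm_le_sqrt_mul_sqrt {E F : Type*} [NormedAddCommGroup E]
    [NormedAddCommGroup F] {f : ℝ → E} {g : ℝ → F} (hab : a ≤ b)
    (hf : MemLp f 2 (volume.restrict (Ioc a b))) (hg : MemLp g 2 (volume.restrict (Ioc a b))) :
    ∫ p in a..b, ‖f p‖ * ‖g p‖ ≤ √(∫ p in a..b, ‖f p‖ ^ 2) * √(∫ p in a..b, ‖g p‖ ^ 2) := by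
  simp only [intervalIntegral.integral_of_le hab]
  simpa [Real.sqrt_eq_rpow] using integral_mul_norm_le_Lp_mul_Lq
    (f := fun p => ‖f p‖) (g := fun p => ‖g p‖)
    Real.HolderConjugate.two_two (by simpa using hf.norm) (by simpa using hg.norm)

theorem memLp_inv_sub (hab : a ≤ b) (hd : 0 < d) (hs : s + d ≤ a ∨ b + d ≤ s) :
    MemLp (fun p => (p - s)⁻¹) 2 (volume.restrict (Ioc a b)) := by
  refine (memLp_two_iff_integrable_sq (by fun_prop)).2 ?_
  simp only [inv_pow]
  exact (intervalIntegrable_iff_integrableOn_Ioc_of_le hab).1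
    (intervalIntegrable_inv_sq_sub hab hd hs)

theorem integral_norm_inv_sub_mul_le {E : Type*} [NormedAddCommGroup E] {v : ℝ → E} (hab : a ≤ b)
    (hd : 0 < d) (hs : s + d ≤ a ∨ b + d ≤ s) (hv : MemLp v 2 (volume.restrict (Ioc a b))) :
    ∫ p in a..b, ‖(p - s)⁻¹‖ * ‖v p‖ ≤ √d⁻¹ * √(∫ p in a..b, ‖v p‖ ^ 2) := by
  refine (integral_mul_norm_le_sqrt_mul_sqrt hab (memLp_inv_sub hab hd hs) hv).trans ?_
  gcongr
  simpa only [Real.norm_eq_abs, sq_abs, inv_pow] using integral_inv_sq_sub_le hab hd hs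

/-- `g` is a symbol of order `-1` centred at `s`: on `S` it obeys the bounds of `c / (p - s)`. This
is the shape of the amplitude left over once the derivative of the phase has been divided out. -/
structure IsInvSymbol (g : ℝ → ℂ) (s c : ℝ) (S : Set ℝ) : Prop where
  differentiableAt : ∀ p ∈ S, DifferentiableAt ℝ g p
  norm_le : ∀ p ∈ S, ‖g p‖ ≤ c * |p - s|⁻¹
  norm_deriv_le : ∀ p ∈ S, ‖deriv g p‖ ≤ c * ((p - s) ^ 2)⁻¹

variable {g w : ℝ → ℂ} {c M : ℝ}

theorem IsInvSymbol.norm_deriv_mul_le {S : Set ℝ} (hg : IsInvSymbol g s c S) {p : ℝ} (hp : p ∈ S)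
    (hw : DifferentiableAt ℝ w p) (hwM : ‖w p‖ ≤ M) :
    ‖deriv (fun q => g q * w q) p‖ ≤
      c * M * ((p - s) ^ 2)⁻¹ + c * (‖(p - s)⁻¹‖ * ‖deriv w p‖) := by
  rw [deriv_fun_mul (hg.differentiableAt p hp) hw]
  refine (norm_add_le _ _).trans ?_
  rw [norm_mul, norm_mul, norm_inv, Real.norm_eq_abs]
  calc ‖deriv g p‖ * ‖w p‖ + ‖g p‖ * ‖deriv w p‖
      ≤ c * ((p - s) ^ 2)⁻¹ * M + c * |p - s|⁻¹ * ‖deriv w p‖ := by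
        gcongr
        · exact (norm_nonneg _).trans (hg.norm_deriv_le p hp)
        · exact hg.norm_deriv_le p hp
        · exact hg.norm_le p hp
    _ = _ := by ring

theorem IsInvSymbol.integral_norm_deriv_mul_le (hg : IsInvSymbol g s c (Icc a b)) (hc : 0 ≤ c)
    (hab : a ≤ b) (hd : 0 < d) (hs : s + d ≤ a ∨ b + d ≤ s)
    (hw : ∀ p ∈ Icc a b, DifferentiableAt ℝ w p) (hwM : ∀ p ∈ Icc a b, ‖w p‖ ≤ M)
    (hw' : MemLp (deriv w) 2 (volume.restrict (Ioc a b))) :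
    IntervalIntegrable (deriv fun p => g p * w p) volume a b ∧
    ∫ p in a..b, ‖deriv (fun q => g q * w q) p‖ ≤
      c / d * (M + √d * √(∫ p in a..b, ‖deriv w p‖ ^ 2)) := by
  have hM : 0 ≤ M := (norm_nonneg _).trans (hwM a (left_mem_Icc.2 hab))
  have hsq := (intervalIntegrable_inv_sq_sub hab hd hs).const_mul (c * M)
  have hprod : IntervalIntegrable (fun p => c * (‖(p - s)⁻¹‖ * ‖deriv w p‖)) volume a b :=
    ((intervalIntegrable_iff_integrableOn_Ioc_of_le hab).2
      ((memLp_inv_sub hab hd hs).norm.integrable_mul hw'.norm)).const_mul c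
  have hle : ∀ p ∈ Icc a b, ‖deriv (fun q => g q * w q) p‖ ≤
      c * M * ((p - s) ^ 2)⁻¹ + c * (‖(p - s)⁻¹‖ * ‖deriv w p‖) := fun p hp =>
    hg.norm_deriv_mul_le hp (hw p hp) (hwM p hp)
  have hint : IntervalIntegrable (deriv fun p => g p * w p) volume a b := by
    refine (hsq.add hprod).mono_fun' (measurable_deriv _).aestronglyMeasurable ?_
    filter_upwards [ae_restrict_mem measurableSet_uIoc] with p hp
    exact hle p (Ioc_subset_Icc_self (uIoc_of_le hab ▸ hp))
  refine ⟨hint, ?_⟩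
  calc ∫ p in a..b, ‖deriv (fun q => g q * w q) p‖
      ≤ ∫ p in a..b, (c * M * ((p - s) ^ 2)⁻¹ + c * (‖(p - s)⁻¹‖ * ‖deriv w p‖)) :=
        intervalIntegral.integral_mono_on hab hint.norm (hsq.add hprod) hle
    _ = c * M * (∫ p in a..b, ((p - s) ^ 2)⁻¹) + c * ∫ p in a..b, ‖(p - s)⁻¹‖ * ‖deriv w p‖ := by
        rw [intervalIntegral.integral_add hsq hprod, intervalIntegral.integral_const_mul,
          intervalIntegral.integral_const_mul]
    _ ≤ c * M * d⁻¹ + c * (√d⁻¹ * √(∫ p in a..b, ‖deriv w p‖ ^ 2)) := by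
        gcongr
        · exact integral_inv_sq_sub_le hab hd hs
        · exact integral_norm_inv_sub_mul_le hab hd hs hw'
    _ = c / d * (M + √d * √(∫ p in a..b, ‖deriv w p‖ ^ 2)) := by
        have : √d⁻¹ = √d / d := by rw [Real.sqrt_inv, Real.sqrt_div_self', one_div]
        rw [this]
        ring

theorem IsInvSymbol.norm_integral_cexp_mul_le {φ φ' : ℝ → ℝ} (hg : IsInvSymbol g s c (Icc a b))
    (hc : 0 ≤ c) (hab : a ≤ b) (hd : 0 < d) (hs : s + d ≤ a ∨ b + d ≤ s)
    (hφ : ∀ p ∈ Icc a b, HasDerivAt φ (φ' p) p) (hφ' : ContinuousOn φ' (Icc a b))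
    (hw : ∀ p ∈ Icc a b, DifferentiableAt ℝ w p) (hwM : ∀ p ∈ Icc a b, ‖w p‖ ≤ M)
    (hw' : MemLp (deriv w) 2 (volume.restrict (Ioc a b))) :
    ‖∫ p in a..b, Complex.exp (Complex.I * φ p) * (φ' p * (g p * w p))‖ ≤
      3 * c / d * (M + √d * √(∫ p in a..b, ‖deriv w p‖ ^ 2)) := by
  obtain ⟨hint, hvar⟩ := hg.integral_norm_deriv_mul_le hc hab hd hs hw hwM hw'
  have : 0 ≤ M := (norm_nonneg _).trans (hwM a (left_mem_Icc.2 hab))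
  have boundary : ∀ p ∈ Icc a b, ‖g p * w p‖ ≤ c / d * M := fun p hp => by
    have hps : |p - s|⁻¹ ≤ d⁻¹ := inv_anti₀ hd (le_abs_sub_of_separated hs hp)
    rw [norm_mul, div_eq_mul_inv]
    gcongr
    · exact (hg.norm_le p hp).trans (by gcongr)
    · exact hwM p hp
  have hnn : 0 ≤ c / d * (√d * √(∫ p in a..b, ‖deriv w p‖ ^ 2)) := by positivity
  calc ‖∫ p in a..b, Complex.exp (Complex.I * φ p) * (φ' p * (g p * w p))‖
      ≤ ‖g a * w a‖ + ‖g b * w b‖ + ∫ p in a..b, ‖deriv (fun q => g q * w q) p‖ :=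
        MKdVPaper.norm_integral_cexp_mul_le hab hφ hφ'
          (fun p hp => (hg.differentiableAt p hp).mul (hw p hp)) hint
    _ ≤ c / d * M + c / d * M + c / d * (M + √d * √(∫ p in a..b, ‖deriv w p‖ ^ 2)) := by
        gcongr
        · exact boundary a (left_mem_Icc.2 hab)
        · exact boundary b (right_mem_Icc.2 hab)
    _ ≤ 3 * c / d * (M + √d * √(∫ p in a..b, ‖deriv w p‖ ^ 2)) := by
        rw [mul_div_assoc]
        linarith

theorem exists_window (hab : a ≤ b) (hd : 0 ≤ d) (s : ℝ) :
    ∃ m n, a ≤ m ∧ m ≤ n ∧ n ≤ b ∧ (a = m ∨ m + d ≤ s) ∧ (n = b ∨ s + d ≤ n) ∧ n - m ≤ 2 * d ∧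
      ∀ p ∈ Ioc m n, |p - s| ≤ d := by
  have hm : a = max a (min b (s - d)) ∨ max a (min b (s - d)) + d ≤ s := by
    rcases le_total a (min b (s - d)) with h | h
    · exact .inr (by rw [max_eq_right h]; linarith [min_le_right b (s - d)])
    · exact .inl (max_eq_left h).symm
  have hn : max a (min b (s + d)) = b ∨ s + d ≤ max a (min b (s + d)) := by
    rcases le_total b (s + d) with h | h
    · exact .inl (by rw [min_eq_left h, max_eq_right hab])
    · exact .inr (by rw [min_eq_right h]; exact le_max_right _ _)
  have hmn : max a (min b (s - d)) ≤ max a (min b (s + d)) := by gcongr; linarith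
  have hmem : ∀ p, max a (min b (s - d)) < p → p ≤ max a (min b (s + d)) → |p - s| ≤ d := by
    intro p h₁ h₂
    obtain ⟨hap, h₁⟩ := max_lt_iff.1 h₁
    obtain ⟨hpb, h₂⟩ := le_min_iff.1 ((le_max_iff.1 h₂).resolve_left hap.not_ge)
    have := (min_lt_iff.1 h₁).resolve_left hpb.not_gt
    exact abs_le.2 ⟨by linarith, by linarith⟩
  have hlen : max a (min b (s + d)) ≤ max a (min b (s - d)) + 2 * d := by
    have : min b (s + d) ≤ min b (s - d) + 2 * d := by
      rw [← min_add_add_right]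
      exact min_le_min (by linarith) (by linarith)
    rw [← max_add_add_right]
    exact max_le_max (by linarith) this
  exact ⟨_, _, le_max_left _ _, hmn, max_le hab (min_le_left _ _), hm, hn,
    sub_le_iff_le_add'.2 hlen, fun p hp => hmem p hp.1 hp.2⟩

theorem norm_intervalIntegral_le_of_window {E : Type*} [NormedAddCommGroup E] [NormedSpace ℝ E]
    {F : ℝ → E} {B T : ℝ} (hd : 0 ≤ d) (hab : a ≤ b) (hF : IntervalIntegrable F volume a b)
    (hB0 : 0 ≤ B) (hT0 : 0 ≤ T)
    (hB : ∀ m n, a ≤ m → m ≤ n → n ≤ b → s + d ≤ m ∨ n + d ≤ s → ‖∫ p in m..n, F p‖ ≤ B)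
    (hT : ∀ p ∈ Ioc a b, |p - s| ≤ d → ‖F p‖ ≤ T) :
    ‖∫ p in a..b, F p‖ ≤ 2 * B + 2 * d * T := by
  obtain ⟨m, n, ham, hmn, hnb, hm, hn, hlen, hmem⟩ := exists_window hab hd s
  have hFi : ∀ {p q}, a ≤ p → p ≤ q → q ≤ b → IntervalIntegrable F volume p q := fun ha hpq hb =>
    hF.mono_set (by rw [uIcc_of_le hab, uIcc_of_le hpq]; exact Icc_subset_Icc ha hb)
  have left : ‖∫ p in a..m, F p‖ ≤ B := by
    rcases hm with rfl | hm
    · simpa using hB0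
    · exact hB a m le_rfl ham (hmn.trans hnb) (.inr hm)
  have right : ‖∫ p in n..b, F p‖ ≤ B := by
    rcases hn with rfl | hn
    · simpa using hB0
    · exact hB n b (ham.trans hmn) hnb le_rfl (.inl hn)
  have window : ‖∫ p in m..n, F p‖ ≤ 2 * d * T := by
    refine (intervalIntegral.norm_integral_le_of_norm_le_const (C := T) fun p hp => ?_).trans ?_
    · rw [uIoc_of_le hmn] at hp
      exact hT p (Ioc_subset_Ioc ham hnb hp) (hmem p hp)
    · rw [abs_of_nonneg (sub_nonneg.2 hmn), mul_comm]
      gcongr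
  calc ‖∫ p in a..b, F p‖
      = ‖(∫ p in a..m, F p) + (∫ p in m..n, F p) + ∫ p in n..b, F p‖ := by
        rw [intervalIntegral.integral_add_adjacent_intervals (hFi le_rfl ham (hmn.trans hnb))
          (hFi ham hmn hnb), intervalIntegral.integral_add_adjacent_intervals
          (hFi le_rfl (ham.trans hmn) hnb) (hFi (ham.trans hmn) hnb le_rfl)]
    _ ≤ B + 2 * d * T + B := norm_add₃_le.trans (by gcongr)
    _ = 2 * B + 2 * d * T := by ring

theorem norm_integral_le_of_forall_Ioo {E : Type*} [NormedAddCommGroup E] [NormedSpace ℝ E]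
    {F : ℝ → E} {B : ℝ} (hab : a < b) (hF : IntervalIntegrable F volume a b)
    (hB : ∀ c ∈ Ioo a b, ‖∫ p in c..b, F p‖ ≤ B) : ‖∫ p in a..b, F p‖ ≤ B := by
  have hcont : ContinuousWithinAt (fun c => ∫ p in c..b, F p) (Ioi a) a := by
    have h := intervalIntegral.continuousOn_primitive_interval_left
      ((intervalIntegrable_iff').1 hF) a left_mem_uIcc
    rw [uIcc_of_le hab.le] at h
    exact (h.mono Ioo_subset_Icc_self).mono_of_mem_nhdsWithin (Ioo_mem_nhdsGT hab)
  refine le_of_tendsto hcont.norm ?_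
  filter_upwards [Ioo_mem_nhdsGT hab] using hB

end OscillatoryIntegrals

section CubicPhase

variable {a b d k s t x L : ℝ} {A w : ℝ → ℂ}

/-- The oscillating factor `e^{i(px + p³t)}` of `physPartial`. -/
def osc (t x p : ℝ) : ℂ := Complex.exp (Complex.I * ((p * x + p ^ 3 * t : ℝ) : ℂ))

theorem norm_osc (t x p : ℝ) : ‖osc t x p‖ = 1 := by
  rw [osc, mul_comm, Complex.norm_exp_ofReal_mul_I]

theorem continuous_osc (t x : ℝ) : Continuous (osc t x) := by
  unfold osc
  fun_prop

theorem hasDerivAt_phase (t x p : ℝ) :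
    HasDerivAt (fun p => p * x + p ^ 3 * t) (x + 3 * t * p ^ 2) p := by
  refine (((hasDerivAt_id p).mul_const x).add ((hasDerivAt_pow 3 p).mul_const t)).congr_deriv ?_
  push_cast
  ring

theorem hasDerivAt_osc_left (t x p : ℝ) :
    HasDerivAt (fun y => osc t y p) (osc t x p * (Complex.I * p)) x := by
  have : HasDerivAt (fun y => p * y + p ^ 3 * t) p x := by
    simpa using ((hasDerivAt_id x).const_mul p).add_const (p ^ 3 * t)
  exact (this.ofReal_comp.const_mul Complex.I).cexp

/-- `A` is an amplitude of order one at the frequency scale `k`, with constant `L`: it obeys the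
bounds of `L * (p + k)`. For `A = p` one takes `L = 1`, for `A = 1` one takes `L = k⁻¹`. -/
structure IsAmplitude (A : ℝ → ℂ) (k L : ℝ) : Prop where
  differentiable : Differentiable ℝ A
  norm_le : ∀ p, 0 ≤ p → ‖A p‖ ≤ L * (p + k)
  norm_deriv_le : ∀ p, ‖deriv A p‖ ≤ L

theorem IsAmplitude.nonneg (hA : IsAmplitude A k L) : 0 ≤ L :=
  (norm_nonneg _).trans (hA.norm_deriv_le 0)

theorem isAmplitude_one (hk : 0 < k) : IsAmplitude (fun _ => 1) k k⁻¹ where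
  differentiable := by fun_prop
  norm_le p hp := by
    rw [norm_one, inv_mul_eq_div, one_le_div hk]
    linarith
  norm_deriv_le p := by simpa using hk.le

theorem isAmplitude_ofReal (hk : 0 ≤ k) : IsAmplitude (fun p => (p : ℂ)) k 1 where
  differentiable := Complex.ofRealCLM.differentiable
  norm_le p hp := by
    rw [Complex.norm_real, Real.norm_of_nonneg hp]
    linarith
  norm_deriv_le p := by
    rw [show deriv (fun p : ℝ => (p : ℂ)) p = 1 from Complex.ofRealCLM.hasDerivAt.deriv, norm_one]

theorem hasDerivAt_ofReal_deriv_phase (t x p : ℝ) :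
    HasDerivAt (fun p : ℝ => ((x + 3 * t * p ^ 2 : ℝ) : ℂ)) (6 * t * p : ℝ) p := by
  refine HasDerivAt.ofReal_comp ((((hasDerivAt_pow 2 p).const_mul (3 * t)).const_add
    x).congr_deriv ?_)
  push_cast
  ring

theorem norm_deriv_div_le {f g : ℝ → ℂ} {p : ℝ} (hf : DifferentiableAt ℝ f p)
    (hg : DifferentiableAt ℝ g p) (hg0 : g p ≠ 0) :
    ‖deriv (fun q => f q / g q) p‖ ≤
      ‖deriv f p‖ * ‖g p‖⁻¹ + ‖f p‖ * ‖deriv g p‖ * ‖g p‖⁻¹ ^ 2 := by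
  have : deriv (fun q => f q / g q) p =
      deriv f p * (g p)⁻¹ - f p * deriv g p * (g p)⁻¹ ^ 2 := by
    rw [deriv_fun_div hf hg hg0]
    field_simp
  rw [this]
  refine (norm_sub_le _ _).trans_eq ?_
  simp only [norm_mul, norm_pow, norm_inv]

theorem ne_zero_and_norm_inv_le {z : ℂ} {r q : ℝ} (ht : 0 < t) (hr : 0 < r) (hq : 0 < q)
    (h : t * (r * q) ≤ 4 * ‖z‖) : z ≠ 0 ∧ ‖z‖⁻¹ ≤ 4 / t * (r⁻¹ * q⁻¹) := by
  have hpos : 0 < t * (r * q) := by positivity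
  have hinv := inv_anti₀ hpos h
  rw [mul_inv, mul_inv, mul_inv] at hinv
  refine ⟨norm_pos_iff.1 (by linarith), ?_⟩
  rw [div_eq_mul_inv]
  linarith

theorem IsAmplitude.norm_div_le {z : ℂ} {p r : ℝ} (hA : IsAmplitude A k L) (ht : 0 < t)
    (hp : 0 ≤ p) (hr : 0 < r) (hpk : 0 < p + k) (h : t * (r * (p + k)) ≤ 4 * ‖z‖) :
    ‖A p / z‖ ≤ 4 * L / t * r⁻¹ := by
  rw [norm_div, div_eq_mul_inv]
  have hL := hA.nonneg
  calc ‖A p‖ * ‖z‖⁻¹ ≤ L * (p + k) * (4 / t * (r⁻¹ * (p + k)⁻¹)) := by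
        gcongr
        exacts [hA.norm_le p hp, (ne_zero_and_norm_inv_le ht hr hpk h).2]
    _ = 4 * L / t * r⁻¹ := by field_simp

theorem IsAmplitude.norm_deriv_div_le {p r : ℝ} (hA : IsAmplitude A k L) (ht : 0 < t)
    (hp : 0 ≤ p) (hk : 0 ≤ k) (hr : 0 < r) (hrk : r ≤ p + k)
    (h : t * (r * (p + k)) ≤ 4 * |x + 3 * t * p ^ 2|) :
    ‖deriv (fun p => A p / (x + 3 * t * p ^ 2 : ℝ)) p‖ ≤ 100 * L / t * (r ^ 2)⁻¹ := by
  have hL := hA.nonneg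
  have hpk : 0 < p + k := hr.trans_le hrk
  rw [← Real.norm_eq_abs, ← Complex.norm_real] at h
  obtain ⟨hψ, hψ_inv⟩ := ne_zero_and_norm_inv_le ht hr hpk h
  have hψ' := hasDerivAt_ofReal_deriv_phase t x p
  refine (MKdVPaper.norm_deriv_div_le (hA.differentiable p) hψ'.differentiableAt hψ).trans ?_
  rw [hψ'.deriv, Complex.norm_real (6 * t * p), Real.norm_of_nonneg (by positivity)]
  calc ‖deriv A p‖ * ‖((x + 3 * t * p ^ 2 : ℝ) : ℂ)‖⁻¹ +
        ‖A p‖ * (6 * t * p) * ‖((x + 3 * t * p ^ 2 : ℝ) : ℂ)‖⁻¹ ^ 2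
      ≤ L * (4 / t * (r⁻¹ * r⁻¹)) +
        L * (p + k) * (6 * t * (p + k)) * (4 / t * (r⁻¹ * (p + k)⁻¹)) ^ 2 := by
        gcongr
        · exact hA.norm_deriv_le p
        · exact hψ_inv.trans (by gcongr)
        · exact hA.norm_le p hp
        · linarith
    _ = 100 * L / t * (r ^ 2)⁻¹ := by
        field_simp
        ring

theorem IsAmplitude.isInvSymbol_div {S : Set ℝ} (hA : IsAmplitude A k L) (ht : 0 < t)
    (hsk : |s| ≤ k) (hS : ∀ p ∈ S, 0 ≤ p) (hne : ∀ p ∈ S, p ≠ s)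
    (hphase : ∀ p ∈ S, t * (|p - s| * (p + k)) ≤ 4 * |x + 3 * t * p ^ 2|) :
    IsInvSymbol (fun p => A p / (x + 3 * t * p ^ 2 : ℝ)) s (100 * L / t) S := by
  have hL := hA.nonneg
  have hps : ∀ p ∈ S, 0 < |p - s| := fun p hp => abs_pos.2 (sub_ne_zero.2 (hne p hp))
  have hpk : ∀ p ∈ S, |p - s| ≤ p + k := fun p hp => by
    have := abs_sub p s
    rw [abs_of_nonneg (hS p hp)] at this
    linarith
  have hpk0 : ∀ p ∈ S, 0 < p + k := fun p hp => (hps p hp).trans_le (hpk p hp)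
  have hphase' : ∀ p ∈ S, t * (|p - s| * (p + k)) ≤ 4 * ‖((x + 3 * t * p ^ 2 : ℝ) : ℂ)‖ := by
    simpa only [Complex.norm_real, Real.norm_eq_abs] using hphase
  refine ⟨fun p hp => ?_, fun p hp => ?_, fun p hp => ?_⟩
  · exact (hA.differentiable p).div (hasDerivAt_ofReal_deriv_phase t x p).differentiableAt
      (ne_zero_and_norm_inv_le ht (hps p hp) (hpk0 p hp) (hphase' p hp)).1
  · refine (hA.norm_div_le ht (hS p hp) (hps p hp) (hpk0 p hp) (hphase' p hp)).trans ?_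
    gcongr
    norm_num
  · rw [← sq_abs]
    exact hA.norm_deriv_div_le ht (hS p hp) ((abs_nonneg s).trans hsk) (hps p hp) (hpk p hp)
      (hphase p hp)

theorem MemE.norm_le_supN (hw : MemE w) (p : ℝ) : ‖w p‖ ≤ supN w := le_ciSup hw.bdd p

theorem MemE.supN_nonneg (hw : MemE w) : 0 ≤ supN w := (norm_nonneg _).trans (hw.norm_le_supN 0)

theorem dL2_nonneg (w : ℝ → ℂ) : 0 ≤ dL2 w := ENNReal.toReal_nonneg

theorem MemE.memLp_deriv_Ioc (hw : MemE w) (ha : 0 ≤ a) :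
    MemLp (deriv w) 2 (volume.restrict (Ioc a b)) :=
  hw.derivL2.mono_measure (Measure.restrict_mono (fun _ hp => ha.trans_lt hp.1) le_rfl)

theorem MemE.sqrt_integral_sq_norm_deriv_le (hw : MemE w) (ha : 0 ≤ a) (hab : a ≤ b) :
    √(∫ p in a..b, ‖deriv w p‖ ^ 2) ≤ dL2 w := by
  have hval : dL2 w = √(∫ p in Ioi 0, ‖deriv w p‖ ^ 2) := by
    rw [dL2, hw.derivL2.eLpNorm_eq_integral_rpow_norm two_ne_zero ENNReal.ofNat_ne_top,
      ENNReal.toReal_ofReal (by positivity), Real.sqrt_eq_rpow]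
    simp
  rw [hval, intervalIntegral.integral_of_le hab]
  exact Real.sqrt_le_sqrt <| setIntegral_mono_set
    ((memLp_two_iff_integrable_sq_norm hw.derivL2.1).1 hw.derivL2)
    (ae_of_all _ fun _ => sq_nonneg _) (Ioc_subset_Ioi_self.trans (Ioi_subset_Ioi ha)).eventuallyLE

theorem MemE.intervalIntegrable (hw : MemE w) (ha : 0 ≤ a) (hab : a ≤ b) :
    IntervalIntegrable w volume a b := by
  have hsub : Ioc a b ⊆ Ioi (0 : ℝ) := fun _ hp => ha.trans_lt hp.1
  rw [intervalIntegrable_iff_integrableOn_Ioc_of_le hab]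
  exact Integrable.of_bound ((hw.cont.mono hsub).aestronglyMeasurable measurableSet_Ioc) (supN w)
    (ae_of_all _ hw.norm_le_supN)

theorem MemE.norm_integral_osc_mul_le (hw : MemE w) (hA : IsAmplitude A k L) (ht : 0 < t)
    (hsk : |s| ≤ k) (ha : 0 < a) (hab : a ≤ b) (hd : 0 < d) (hs : s + d ≤ a ∨ b + d ≤ s)
    (hphase : ∀ p ∈ Icc a b, t * (|p - s| * (p + k)) ≤ 4 * |x + 3 * t * p ^ 2|) :
    ‖∫ p in a..b, osc t x p * (A p * w p)‖ ≤ 300 * L / (t * d) * (supN w + √d * dL2 w) := by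
  have hL := hA.nonneg
  have hpos : ∀ p ∈ Icc a b, 0 < p := fun p hp => ha.trans_le hp.1
  have hps : ∀ p ∈ Icc a b, 0 < |p - s| := fun p hp => hd.trans_le (le_abs_sub_of_separated hs hp)
  have hg := hA.isInvSymbol_div ht hsk (fun p hp => (hpos p hp).le)
    (fun p hp => sub_ne_zero.1 (abs_pos.1 (hps p hp))) hphase
  have hψ0 : ∀ p ∈ Icc a b, ((x + 3 * t * p ^ 2 : ℝ) : ℂ) ≠ 0 := fun p hp => by
    have hpk : 0 < p + k := by linarith [hpos p hp, abs_nonneg s]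
    refine (ne_zero_and_norm_inv_le ht (hps p hp) hpk ?_).1
    simpa only [Complex.norm_real, Real.norm_eq_abs] using hphase p hp
  calc ‖∫ p in a..b, osc t x p * (A p * w p)‖
      = ‖∫ p in a..b, Complex.exp (Complex.I * (p * x + p ^ 3 * t : ℝ)) *
          ((x + 3 * t * p ^ 2 : ℝ) * (A p / (x + 3 * t * p ^ 2 : ℝ) * w p))‖ := by
        congr 1
        refine intervalIntegral.integral_congr fun p hp => ?_
        rw [uIcc_of_le hab] at hp
        rw [← mul_assoc _ (A p / _), mul_div_cancel₀ _ (hψ0 p hp), osc]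
    _ ≤ 3 * (100 * L / t) / d * (supN w + √d * √(∫ p in a..b, ‖deriv w p‖ ^ 2)) :=
        hg.norm_integral_cexp_mul_le (by positivity) hab hd hs (fun p _ => hasDerivAt_phase t x p)
          (by fun_prop) (fun p hp => hw.diff p (hpos p hp)) (fun p _ => hw.norm_le_supN p)
          (hw.memLp_deriv_Ioc ha.le)
    _ ≤ 3 * (100 * L / t) / d * (supN w + √d * dL2 w) := by
        gcongr
        exact hw.sqrt_integral_sq_norm_deriv_le ha.le hab
    _ = 300 * L / (t * d) * (supN w + √d * dL2 w) := by
        field_simp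
        ring

end CubicPhase

section JapaneseBracket

theorem one_le_jap (y : ℝ) : 1 ≤ jap y :=
  Real.one_le_sqrt.2 (by linarith [sq_nonneg y])

theorem jap_sq (y : ℝ) : jap y ^ 2 = 1 + y ^ 2 := Real.sq_sqrt (by positivity)

/-- `⟨y⟩^{1/4}`. With `y = x / t^{1/3}`, every length scale of the phase `px + p³t` is a power of
this quantity, up to a power of `t`. -/
def japRoot (y : ℝ) : ℝ := jap y ^ (1 / 4 : ℝ)

theorem one_le_japRoot (y : ℝ) : 1 ≤ japRoot y := Real.one_le_rpow (one_le_jap y) (by norm_num)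

theorem japRoot_pos (y : ℝ) : 0 < japRoot y := one_pos.trans_le (one_le_japRoot y)

theorem japRoot_pow_four (y : ℝ) : japRoot y ^ 4 = jap y := by
  rw [japRoot, ← Real.rpow_natCast, ← Real.rpow_mul (zero_le_one.trans (one_le_jap y))]
  norm_num

theorem jap_rpow_neg_div_four (y : ℝ) (n : ℕ) : jap y ^ (-(n / 4) : ℝ) = (japRoot y ^ n)⁻¹ := by
  have hj := zero_le_one.trans (one_le_jap y)
  rw [Real.rpow_neg hj, japRoot, ← Real.rpow_mul_natCast hj, one_div_mul_eq_div]

theorem continuous_japRoot : Continuous japRoot := by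
  unfold japRoot jap
  exact (by fun_prop : Continuous fun y : ℝ => √(1 + y ^ 2)).rpow_const fun _ => .inr (by norm_num)

theorem abs_add_jap_le {y : ℝ} (hy : y ≤ 1) : |y + jap y| ≤ 5 / 2 := by
  have hj := jap_sq y
  have hj1 := one_le_jap y
  refine abs_le.2 ⟨by nlinarith, ?_⟩
  rcases le_total y 0 with h | h
  · nlinarith
  · nlinarith

theorem jap_le_two_mul {y : ℝ} (hy : 1 ≤ y) : jap y ≤ 2 * y :=
  Real.sqrt_le_iff.2 ⟨by linarith, by nlinarith⟩

end JapaneseBracket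

section Regions

variable {R h t x y L : ℝ} {A w : ℝ → ℂ}

theorem mul_abs_sub_mul_le_of_rescaled {p κ σ : ℝ} (hh : 0 < h) (ht : t * h ^ 3 = 1)
    (hq : |p / h - σ| * (p / h + κ) ≤ 4 * |h * x + 3 * (p / h) ^ 2|) :
    t * (|p - h * σ| * (p + h * κ)) ≤ 4 * |x + 3 * t * p ^ 2| := by
  have h₁ : t * (|p - h * σ| * (p + h * κ)) = h⁻¹ * (|p / h - σ| * (p / h + κ)) := by
    have : p - h * σ = h * (p / h - σ) := by field_simp
    rw [this, abs_mul, abs_of_pos hh, eq_div_of_mul_eq (by positivity) ht]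
    field_simp
  have h₂ : x + 3 * t * p ^ 2 = h⁻¹ * (h * x + 3 * (p / h) ^ 2) := by
    rw [eq_div_of_mul_eq (by positivity) ht]
    field_simp
  rw [h₁, h₂, abs_mul, abs_of_pos (inv_pos.2 hh), mul_left_comm 4]
  gcongr

/-- The positive root of `-⟨y⟩ + 3q²`. For `y ≤ 1` it serves as the stationary point of the phase
`yq + q³`: its derivative `y + 3q²` differs from `-⟨y⟩ + 3q²` by a bounded amount. -/
def stationaryPoint (y : ℝ) : ℝ := japRoot y ^ 2 / √3

theorem stationaryPoint_pos (y : ℝ) : 0 < stationaryPoint y :=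
  div_pos (pow_pos (japRoot_pos y) 2) (by positivity)

theorem stationaryPoint_le (y : ℝ) : stationaryPoint y ≤ japRoot y ^ 2 :=
  div_le_self (sq_nonneg _) (Real.one_le_sqrt.2 (by norm_num))

theorem three_mul_stationaryPoint_sq (y : ℝ) : 3 * stationaryPoint y ^ 2 = jap y := by
  rw [stationaryPoint, div_pow, Real.sq_sqrt (by norm_num), ← japRoot_pow_four]
  ring

theorem japRoot_sq_le_two_mul_stationaryPoint (y : ℝ) : japRoot y ^ 2 ≤ 2 * stationaryPoint y := by
  refine (sq_le_sq₀ (by positivity) (by linarith [stationaryPoint_pos y])).1 ?_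
  have hj : (japRoot y ^ 2) ^ 2 = jap y := by rw [← pow_mul, japRoot_pow_four]
  linarith [three_mul_stationaryPoint_sq y, sq_nonneg (stationaryPoint y),
    mul_pow 2 (stationaryPoint y) 2]

theorem abs_sub_mul_add_le_of_le_one {q : ℝ} (hy : y ≤ 1) (hq : 0 ≤ q)
    (hq' : 2 / japRoot y ≤ |q - stationaryPoint y|) :
    |q - stationaryPoint y| * (q + japRoot y ^ 2) ≤ 4 * |y + 3 * q ^ 2| := by
  have hj := one_le_japRoot y
  have hσj := japRoot_sq_le_two_mul_stationaryPoint y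
  have hσsq := three_mul_stationaryPoint_sq y
  have hσ0 := stationaryPoint_pos y
  set j := japRoot y
  set σ := stationaryPoint y
  have far : 1 ≤ |q - σ| * (q + σ) := calc
    1 ≤ 2 / j * (j ^ 2 / 2) := by field_simp; exact hj
    _ ≤ |q - σ| * (q + σ) := by gcongr; linarith
  have split : 3 * (|q - σ| * (q + σ)) ≤ |y + 3 * q ^ 2| + 5 / 2 := calc
    3 * (|q - σ| * (q + σ)) = |(y + 3 * q ^ 2) - (y + jap y)| := by
      rw [show (y + 3 * q ^ 2) - (y + jap y) = 3 * ((q - σ) * (q + σ)) by rw [← hσsq]; ring,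
        abs_mul, abs_mul, abs_of_pos (three_pos (α := ℝ)), abs_of_pos (by positivity : 0 < q + σ)]
    _ ≤ |y + 3 * q ^ 2| + 5 / 2 := (abs_sub _ _).trans (by gcongr; exact abs_add_jap_le hy)
  calc |q - σ| * (q + j ^ 2) ≤ |q - σ| * (2 * (q + σ)) := by gcongr; linarith
    _ ≤ 4 * |y + 3 * q ^ 2| := by linarith

theorem abs_add_mul_add_le_of_one_le {q : ℝ} (hy : 1 ≤ y) (hq : 0 ≤ q) :
    |q - -japRoot y ^ 2| * (q + japRoot y ^ 2) ≤ 4 * |y + 3 * q ^ 2| := by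
  have hj := japRoot_pow_four y
  have := jap_le_two_mul hy
  rw [sub_neg_eq_add, abs_of_nonneg (by positivity), abs_of_nonneg (by positivity)]
  nlinarith [sq_nonneg (q - japRoot y ^ 2)]

/-- The truncated oscillatory integral `∫₀^R e^{i(px + p³t)} f(p) dp`. -/
def oscIntegral (t : ℝ) (f : ℝ → ℂ) (x R : ℝ) : ℂ := ∫ p in (0 : ℝ)..R, osc t x p * f p

theorem EnormP_eq (hh : 0 < h) (ht : t * h ^ 3 = 1) (w : ℝ → ℂ) :
    EnormP t w = supN w + √h * dL2 w := by
  have hpow : t = h ^ (-3 : ℝ) := by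
    rw [Real.rpow_neg hh.le, Real.rpow_ofNat]
    exact eq_inv_of_mul_eq_one_left ht
  rw [EnormP, hpow, ← Real.rpow_mul hh.le, Real.sqrt_eq_rpow]
  norm_num

theorem MemE.EnormP_nonneg (hw : MemE w) (ht : 0 ≤ t) : 0 ≤ EnormP t w :=
  add_nonneg hw.supN_nonneg (mul_nonneg (Real.rpow_nonneg ht _) (dL2_nonneg w))

theorem supN_le_EnormP (ht : 0 ≤ t) (w : ℝ → ℂ) : supN w ≤ EnormP t w :=
  le_add_of_nonneg_right (mul_nonneg (Real.rpow_nonneg ht _) (dL2_nonneg w))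

theorem MemE.supN_add_sqrt_mul_le {d c : ℝ} (hw : MemE w) (hh : 0 < h) (ht : t * h ^ 3 = 1)
    (hc : 1 ≤ c) (hd : d ≤ h * c ^ 2) : supN w + √d * dL2 w ≤ c * EnormP t w := by
  have hsqrt : √d ≤ √h * c := by
    rw [← Real.sqrt_sq (zero_le_one.trans hc), ← Real.sqrt_mul hh.le]
    exact Real.sqrt_le_sqrt hd
  calc supN w + √d * dL2 w ≤ c * supN w + √h * c * dL2 w := by
        gcongr
        exacts [le_mul_of_one_le_left hw.supN_nonneg hc, dL2_nonneg w]
    _ = c * EnormP t w := by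
        rw [EnormP_eq hh ht]
        ring

theorem MemE.intervalIntegrable_osc_mul (hw : MemE w) (hA : Continuous A) {a b : ℝ} (ha : 0 ≤ a)
    (hab : a ≤ b) : IntervalIntegrable (fun p => osc t x p * (A p * w p)) volume a b :=
  ((hw.intervalIntegrable ha hab).continuousOn_mul hA.continuousOn).continuousOn_mul
    (continuous_osc t x).continuousOn

theorem MemE.norm_oscIntegral_le_of_one_le (hw : MemE w) (hh : 0 < h) (ht : t * h ^ 3 = 1)
    (hx : 1 ≤ h * x) (hA : IsAmplitude A (h * japRoot (h * x) ^ 2) L) (hR : 0 < R) :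
    ‖oscIntegral t (fun p => A p * w p) x R‖ ≤
      300 * L * h ^ 2 / japRoot (h * x) * EnormP t w := by
  have hj := one_le_japRoot (h * x)
  have ht0 : 0 < t := pos_of_mul_pos_left (ht ▸ one_pos) (by positivity)
  have hL := hA.nonneg
  refine norm_integral_le_of_forall_Ioo hR
    (hw.intervalIntegrable_osc_mul hA.differentiable.continuous le_rfl hR.le) fun a ha => ?_
  have hphase : ∀ p ∈ Icc a R, t * (|p - -(h * japRoot (h * x) ^ 2)| *
      (p + h * japRoot (h * x) ^ 2)) ≤ 4 * |x + 3 * t * p ^ 2| := fun p hp => by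
    rw [← mul_neg]
    exact mul_abs_sub_mul_le_of_rescaled hh ht
      (abs_add_mul_add_le_of_one_le hx (div_nonneg (ha.1.le.trans hp.1) hh.le))
  have hk : 0 < h * japRoot (h * x) ^ 2 := by positivity
  calc ‖∫ p in a..R, osc t x p * (A p * w p)‖
      ≤ 300 * L / (t * (h * japRoot (h * x) ^ 2)) *
          (supN w + √(h * japRoot (h * x) ^ 2) * dL2 w) :=
        hw.norm_integral_osc_mul_le hA ht0 (by rw [abs_neg, abs_of_pos hk]) ha.1 ha.2.le hk
          (.inl (by linarith [ha.1])) hphase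
    _ ≤ 300 * L / (t * (h * japRoot (h * x) ^ 2)) * (japRoot (h * x) * EnormP t w) := by
        gcongr
        exact hw.supN_add_sqrt_mul_le hh ht hj le_rfl
    _ = 300 * L * h ^ 2 / japRoot (h * x) * EnormP t w := by
        rw [eq_div_of_mul_eq (by positivity) ht]
        field_simp

theorem MemE.norm_integral_osc_mul_le_of_le_one {a b : ℝ} (hw : MemE w) (hh : 0 < h)
    (ht : t * h ^ 3 = 1) (hx : h * x ≤ 1) (hA : IsAmplitude A (h * japRoot (h * x) ^ 2) L)
    (ha : 0 < a) (hab : a ≤ b)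
    (hs : h * stationaryPoint (h * x) + 2 * h / japRoot (h * x) ≤ a ∨
      b + 2 * h / japRoot (h * x) ≤ h * stationaryPoint (h * x)) :
    ‖∫ p in a..b, osc t x p * (A p * w p)‖ ≤ 300 * L * h ^ 2 * japRoot (h * x) * EnormP t w := by
  have ht0 : 0 < t := pos_of_mul_pos_left (ht ▸ one_pos) (by positivity)
  have hL := hA.nonneg
  have hj := one_le_japRoot (h * x)
  have hσ := stationaryPoint_le (h * x)
  have hσ0 := stationaryPoint_pos (h * x)
  have hphase : ∀ p ∈ Icc a b, t * (|p - h * stationaryPoint (h * x)| *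
      (p + h * japRoot (h * x) ^ 2)) ≤ 4 * |x + 3 * t * p ^ 2| := fun p hp => by
    have hfar := le_abs_sub_of_separated hs hp
    refine mul_abs_sub_mul_le_of_rescaled hh ht
      (abs_sub_mul_add_le_of_le_one hx (div_nonneg (ha.le.trans hp.1) hh.le) ?_)
    rw [show p / h - stationaryPoint (h * x) = (p - h * stationaryPoint (h * x)) / h by field_simp,
      abs_div, abs_of_pos hh, le_div_iff₀ hh, div_mul_eq_mul_div]
    exact hfar
  calc ‖∫ p in a..b, osc t x p * (A p * w p)‖
      ≤ 300 * L / (t * (2 * h / japRoot (h * x))) *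
          (supN w + √(2 * h / japRoot (h * x)) * dL2 w) :=
        hw.norm_integral_osc_mul_le hA ht0 (by rw [abs_of_pos (by positivity)]; gcongr) ha hab
          (by positivity) hs hphase
    _ ≤ 300 * L / (t * (2 * h / japRoot (h * x))) * (2 * EnormP t w) := by
        gcongr
        refine hw.supN_add_sqrt_mul_le hh ht one_le_two ?_
        rw [div_le_iff₀ (by positivity)]
        nlinarith
    _ = 300 * L * h ^ 2 * japRoot (h * x) * EnormP t w := by
        rw [eq_div_of_mul_eq (by positivity) ht]
        field_simp

theorem MemE.norm_osc_mul_le_of_near {p : ℝ} (hw : MemE w) (hh : 0 < h)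
    (hA : IsAmplitude A (h * japRoot (h * x) ^ 2) L) (hp : 0 ≤ p)
    (hnear : |p - h * stationaryPoint (h * x)| ≤ 2 * h / japRoot (h * x)) :
    ‖osc t x p * (A p * w p)‖ ≤ L * (4 * h * japRoot (h * x) ^ 2) * supN w := by
  have hj := one_le_japRoot (h * x)
  have hL := hA.nonneg
  have hwidth : 2 * h / japRoot (h * x) ≤ h * (2 * japRoot (h * x) ^ 2) := by
    rw [div_le_iff₀ (by positivity)]
    nlinarith [one_le_pow₀ hj (n := 3)]
  have hσ : h * stationaryPoint (h * x) ≤ h * japRoot (h * x) ^ 2 := by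
    gcongr
    exact stationaryPoint_le _
  rw [norm_mul, norm_osc, one_mul, norm_mul]
  gcongr
  · refine (hA.norm_le p hp).trans ?_
    gcongr
    linarith [(abs_le.1 hnear).2]
  · exact hw.norm_le_supN p

theorem MemE.norm_oscIntegral_le_of_le_one (hw : MemE w) (hh : 0 < h) (ht : t * h ^ 3 = 1)
    (hx : h * x ≤ 1) (hA : IsAmplitude A (h * japRoot (h * x) ^ 2) L) (hR : 0 < R) :
    ‖oscIntegral t (fun p => A p * w p) x R‖ ≤
      616 * L * h ^ 2 * japRoot (h * x) * EnormP t w := by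
  have ht0 : 0 < t := pos_of_mul_pos_left (ht ▸ one_pos) (by positivity)
  have hj := japRoot_pos (h * x)
  have hL := hA.nonneg
  have hE := hw.EnormP_nonneg ht0.le
  have hsup := hw.supN_nonneg
  refine norm_integral_le_of_forall_Ioo hR
    (hw.intervalIntegrable_osc_mul hA.differentiable.continuous le_rfl hR.le) fun a ha => ?_
  calc ‖∫ p in a..R, osc t x p * (A p * w p)‖
      ≤ 2 * (300 * L * h ^ 2 * japRoot (h * x) * EnormP t w) +
          2 * (2 * h / japRoot (h * x)) * (L * (4 * h * japRoot (h * x) ^ 2) * supN w) :=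
        norm_intervalIntegral_le_of_window (by positivity) ha.2.le
          (hw.intervalIntegrable_osc_mul hA.differentiable.continuous ha.1.le ha.2.le)
          (by positivity) (by positivity)
          (fun m n hm hmn _ hs =>
            hw.norm_integral_osc_mul_le_of_le_one hh ht hx hA (ha.1.trans_le hm) hmn hs)
          (fun p hp hnear => hw.norm_osc_mul_le_of_near hh hA (ha.1.trans hp.1).le hnear)
    _ ≤ 2 * (300 * L * h ^ 2 * japRoot (h * x) * EnormP t w) +
          2 * (2 * h / japRoot (h * x)) * (L * (4 * h * japRoot (h * x) ^ 2) * EnormP t w) := by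
        gcongr
        exact supN_le_EnormP ht0.le w
    _ = 616 * L * h ^ 2 * japRoot (h * x) * EnormP t w := by
        field_simp
        ring

theorem MemE.norm_oscIntegral_le (hw : MemE w) (hh : 0 < h) (ht : t * h ^ 3 = 1)
    (hA : IsAmplitude A (h * japRoot (h * x) ^ 2) L) (hR : 0 < R) :
    ‖oscIntegral t (fun p => A p * w p) x R‖ ≤
      616 * L * h ^ 2 * japRoot (h * x) * EnormP t w := by
  rcases le_total (h * x) 1 with hx | hx
  · exact hw.norm_oscIntegral_le_of_le_one hh ht hx hA hR
  have ht0 : 0 < t := pos_of_mul_pos_left (ht ▸ one_pos) (by positivity)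
  have hj := one_le_japRoot (h * x)
  have hL := hA.nonneg
  have hE := hw.EnormP_nonneg ht0.le
  refine (hw.norm_oscIntegral_le_of_one_le hh ht hx hA hR).trans ?_
  gcongr
  calc 300 * L * h ^ 2 / japRoot (h * x) ≤ 300 * L * h ^ 2 := div_le_self (by positivity) hj
    _ ≤ 616 * L * h ^ 2 * japRoot (h * x) := by nlinarith [show 0 ≤ L * h ^ 2 by positivity]

end Regions

section PhysicalSpace

variable {R h t x B : ℝ} {f w : ℝ → ℂ} {u : ℝ → ℝ}

-- No convergence of `F'` is needed: its bound is a local Lipschitz bound for `F`, and Lipschitz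
-- bounds survive pointwise limits.
theorem norm_deriv_le_of_tendsto {ι E : Type*} [NormedAddCommGroup E] [NormedSpace ℝ E]
    {l : Filter ι} [l.NeBot] {F F' : ι → ℝ → E} {g : ℝ → E} {b : ℝ → ℝ}
    (hF : ∀ y, Tendsto (fun i => F i y) l (𝓝 (g y)))
    (hF' : ∀ᶠ q in l ×ˢ 𝓝 x, HasDerivAt (F q.1) (F' q.1 q.2) q.2 ∧ ‖F' q.1 q.2‖ ≤ b q.2)
    (hb : ContinuousAt b x) : ‖deriv g x‖ ≤ b x := by
  obtain ⟨P, hP, Q, hQ, hPQ⟩ := eventually_prod_iff.1 hF'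
  obtain ⟨i, hi⟩ := hP.exists
  have hb0 : 0 ≤ b x := (norm_nonneg _).trans (hPQ hi hQ.self_of_nhds).2
  refine le_of_forall_pos_le_add fun ε hε => norm_deriv_le_of_lip' (by positivity) ?_
  obtain ⟨δ, hδ, hball⟩ := Metric.eventually_nhds_iff_ball.1
    (hQ.and (hb.eventually_le_const (lt_add_of_pos_right (b x) hε)))
  filter_upwards [Metric.ball_mem_nhds x hδ] with y hy
  refine le_of_tendsto ((hF y).sub (hF x)).norm ?_
  filter_upwards [hP] with i hi
  exact Convex.norm_image_sub_le_of_norm_hasDerivWithin_le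
    (fun z hz => (hPQ hi (hball z hz).1).1.hasDerivWithinAt)
    (fun z hz => (hPQ hi (hball z hz).1).2.trans (hball z hz).2)
    (convex_ball x δ) (Metric.mem_ball_self hδ) hy

theorem hasDerivAt_oscIntegral (hR : 0 ≤ R) (hf : IntervalIntegrable f volume 0 R) (t x : ℝ) :
    HasDerivAt (fun y => oscIntegral t f y R)
      (Complex.I * oscIntegral t (fun p => p * f p) x R) x := by
  have hint : ∀ y, IntervalIntegrable (fun p => osc t y p * f p) volume 0 R := fun y =>
    hf.continuousOn_mul (continuous_osc t y).continuousOn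
  have hint' : IntervalIntegrable (fun p => Complex.I * (osc t x p * (p * f p))) volume 0 R :=
    ((hf.continuousOn_mul Complex.continuous_ofReal.continuousOn).continuousOn_mul
      (continuous_osc t x).continuousOn).const_mul _
  have hderiv := (intervalIntegral.hasDerivAt_integral_of_dominated_loc_of_deriv_le
    (s := univ) (bound := fun p => R * ‖f p‖) (F := fun y p => osc t y p * f p)
    (F' := fun y p => Complex.I * (osc t y p * (p * f p))) univ_mem
    (Eventually.of_forall fun y => (intervalIntegrable_iff.1 (hint y)).aestronglyMeasurable)
    (hint x) (intervalIntegrable_iff.1 hint').aestronglyMeasurable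
    (ae_of_all _ fun p hp y _ => by
      rw [uIoc_of_le hR] at hp
      rw [norm_mul, norm_mul, norm_mul, norm_osc, Complex.norm_I, one_mul, one_mul,
        Complex.norm_real, Real.norm_of_nonneg hp.1.le]
      gcongr
      exact hp.2)
    (hf.norm.const_mul R)
    (ae_of_all _ fun p _ y _ =>
      ((hasDerivAt_osc_left t y p).mul_const (f p)).congr_deriv (by ring))).2
  rwa [intervalIntegral.integral_const_mul] at hderiv

theorem physPartial_eq (hR : 0 ≤ R) (w : ℝ → ℂ) (t x : ℝ) :
    physPartial w t x R = 1 / Real.pi * (oscIntegral t w x R).re := by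
  rw [physPartial, oscIntegral, intervalIntegral.integral_of_le hR]
  rfl

theorem abs_one_div_pi_mul_re_le (z : ℂ) : |1 / Real.pi * z.re| ≤ ‖z‖ := by
  have hpi : 1 / Real.pi ≤ 1 := (div_le_one Real.pi_pos).2 (by linarith [Real.pi_gt_three])
  rw [abs_mul, abs_of_pos (by positivity)]
  exact (mul_le_of_le_one_left (abs_nonneg _) hpi).trans (Complex.abs_re_le_norm z)

theorem IsPhys.abs_le_of_forall (hu : IsPhys w t u)
    (hB : ∀ R, 0 < R → ‖oscIntegral t w x R‖ ≤ B) : |u x| ≤ B := by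
  refine le_of_tendsto (hu x).abs ?_
  filter_upwards [eventually_gt_atTop 0] with R hR
  rw [physPartial_eq hR.le]
  exact (abs_one_div_pi_mul_re_le _).trans (hB R hR)

theorem IsPhys.abs_deriv_le_of_eventually (hu : IsPhys w t u) (hw : MemE w) {b : ℝ → ℝ}
    (hB : ∀ᶠ z in 𝓝 x, ∀ R, 0 < R → ‖oscIntegral t (fun p => p * w p) z R‖ ≤ b z)
    (hb : ContinuousAt b x) : |deriv u x| ≤ b x := by
  refine norm_deriv_le_of_tendsto (F' := fun R z => 1 / Real.pi *
    (Complex.I * oscIntegral t (fun p => p * w p) z R).re) hu ?_ hb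
  filter_upwards [(eventually_gt_atTop (0 : ℝ)).prod_mk hB] with ⟨R, z⟩ ⟨hR, hz⟩
  refine ⟨?_, (abs_one_div_pi_mul_re_le _).trans ?_⟩
  · simp only [physPartial_eq (le_of_lt hR)]
    exact (Complex.reCLM.hasFDerivAt.comp_hasDerivAt z (hasDerivAt_oscIntegral (le_of_lt hR)
      (hw.intervalIntegrable le_rfl (le_of_lt hR)) t z)).const_mul _
  · rw [norm_mul, Complex.norm_I, one_mul]
    exact hz R hR

theorem IsPhys.abs_le (hu : IsPhys w t u) (hw : MemE w) (hh : 0 < h) (ht : t * h ^ 3 = 1) (x : ℝ) :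
    |u x| ≤ 616 * h * EnormP t w / japRoot (h * x) := by
  have hj := japRoot_pos (h * x)
  refine hu.abs_le_of_forall fun R hR => ?_
  have hA := isAmplitude_one (show 0 < h * japRoot (h * x) ^ 2 by positivity)
  simpa only [one_mul] using (hw.norm_oscIntegral_le hh ht hA hR).trans_eq (by field_simp)

theorem IsPhys.abs_le_of_one_le (hu : IsPhys w t u) (hw : MemE w) (hh : 0 < h) (ht : t * h ^ 3 = 1)
    (hx : 1 ≤ h * x) : |u x| ≤ 300 * h * EnormP t w / japRoot (h * x) ^ 3 := by
  have hj := japRoot_pos (h * x)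
  refine hu.abs_le_of_forall fun R hR => ?_
  have hA := isAmplitude_one (show 0 < h * japRoot (h * x) ^ 2 by positivity)
  simpa only [one_mul] using (hw.norm_oscIntegral_le_of_one_le hh ht hx hA hR).trans_eq
    (by field_simp)

theorem IsPhys.abs_deriv_le (hu : IsPhys w t u) (hw : MemE w) (hh : 0 < h) (ht : t * h ^ 3 = 1)
    (x : ℝ) : |deriv u x| ≤ 616 * h ^ 2 * EnormP t w * japRoot (h * x) := by
  refine hu.abs_deriv_le_of_eventually hw
    (b := fun z => 616 * h ^ 2 * EnormP t w * japRoot (h * z)) ?_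
    ((continuous_japRoot.comp (continuous_const_mul h)).const_mul _).continuousAt
  filter_upwards with z R hR
  exact (hw.norm_oscIntegral_le hh ht (isAmplitude_ofReal (by positivity)) hR).trans_eq (by ring)

theorem IsPhys.abs_deriv_le_of_one_lt (hu : IsPhys w t u) (hw : MemE w) (hh : 0 < h)
    (ht : t * h ^ 3 = 1) (hx : 1 < h * x) :
    |deriv u x| ≤ 300 * h ^ 2 * EnormP t w / japRoot (h * x) := by
  refine hu.abs_deriv_le_of_eventually hw
    (b := fun z => 300 * h ^ 2 * EnormP t w / japRoot (h * z)) ?_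
    (continuousAt_const.div (continuous_japRoot.comp (continuous_const_mul h)).continuousAt
      (japRoot_pos _).ne')
  filter_upwards [(continuous_const_mul h).continuousAt.eventually_const_lt hx] with z hz R hR
  exact (hw.norm_oscIntegral_le_of_one_le hh ht (le_of_lt hz) (isAmplitude_ofReal (by positivity))
    hR).trans_eq (by ring)

end PhysicalSpace

section LSix

theorem eLpNorm_comp_mul_left {E : Type*} [NormedAddCommGroup E] {c : ℝ} (hc : c ≠ 0)
    (f : ℝ → E) {p : ENNReal} (hp : p ≠ ⊤) :
    eLpNorm (fun x => f (c * x)) p volume =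
      ENNReal.ofReal |c⁻¹| ^ (1 / p).toReal * eLpNorm f p volume := by
  have := (measurableEmbedding_mulLeft₀ hc).eLpNorm_map_measure (g := f) (p := p) (μ := volume)
  rw [Real.map_volume_mul_left hc, eLpNorm_smul_measure_of_ne_top hp, smul_eq_mul] at this
  exact this.symm

theorem memLp_inv_japRoot : MemLp (fun y => (japRoot y)⁻¹) 6 volume := by
  have hcont : Continuous fun y => (japRoot y)⁻¹ :=
    continuous_japRoot.inv₀ fun y => (japRoot_pos y).ne'
  rw [← integrable_norm_rpow_iff hcont.aestronglyMeasurable (by norm_num) (by norm_num)]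
  refine (integrable_rpow_neg_one_add_norm_sq (E := ℝ) (r := 3 / 2) (by norm_num)).congr
    (ae_of_all _ fun y => ?_)
  have hy : 0 ≤ 1 + y ^ 2 := by positivity
  simp only [norm_inv, Real.norm_of_nonneg (japRoot_pos y).le, Real.norm_eq_abs y, sq_abs,
    ENNReal.toReal_ofNat]
  rw [japRoot, jap, Real.sqrt_eq_rpow, ← Real.rpow_mul hy, ← Real.rpow_neg hy, ← Real.rpow_mul hy]
  norm_num

theorem toReal_eLpNorm_six_le {u : ℝ → ℝ} {B h : ℝ} (hh : 0 < h)
    (hu : ∀ x, |u x| ≤ B / japRoot (h * x)) :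
    (eLpNorm u 6 volume).toReal ≤
      B * (h ^ (-(1 / 6) : ℝ) * (eLpNorm (fun y => (japRoot y)⁻¹) 6 volume).toReal) := by
  have hB : 0 ≤ B := by
    simpa using (le_div_iff₀ (japRoot_pos _)).1 ((abs_nonneg _).trans (hu 0))
  have hle := eLpNorm_le_mul_eLpNorm_of_ae_le_mul (μ := volume) (f := u) (c := B)
    (g := fun x => (japRoot (h * x))⁻¹) (ae_of_all _ fun x => by
      rw [norm_inv, Real.norm_of_nonneg (japRoot_pos _).le]
      exact hu x) 6
  rw [eLpNorm_comp_mul_left hh.ne' (fun y => (japRoot y)⁻¹) (by norm_num)] at hle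
  refine (ENNReal.toReal_mono ?_ hle).trans_eq ?_
  · exact ENNReal.mul_ne_top ENNReal.ofReal_ne_top (ENNReal.mul_ne_top
      (ENNReal.rpow_ne_top_of_nonneg ENNReal.toReal_nonneg ENNReal.ofReal_ne_top)
      memLp_inv_japRoot.eLpNorm_ne_top)
  · have hexp : (1 / 6 : ENNReal).toReal = 1 / 6 := by simp
    rw [ENNReal.toReal_mul, ENNReal.toReal_mul, ← ENNReal.toReal_rpow, ENNReal.toReal_ofReal hB,
      ENNReal.toReal_ofReal (abs_nonneg _), abs_of_pos (inv_pos.2 hh), hexp,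
      Real.inv_rpow hh.le, ← Real.rpow_neg hh.le]

end LSix

section Decay

variable {t x : ℝ} {w : ℝ → ℂ} {u : ℝ → ℝ}

theorem mul_rpow_neg_one_third_pow_three (ht : 0 < t) : t * (t ^ (-(1 / 3) : ℝ)) ^ 3 = 1 := by
  rw [← Real.rpow_mul_natCast ht.le]
  norm_num [Real.rpow_neg_one, ht.ne']

theorem div_rpow_one_third (ht : 0 < t) (x : ℝ) :
    x / t ^ (1 / 3 : ℝ) = t ^ (-(1 / 3) : ℝ) * x := by
  rw [Real.rpow_neg ht.le, inv_mul_eq_div]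

theorem one_lt_rpow_neg_one_third_mul (ht : 0 < t) (hx : t ^ (1 / 3 : ℝ) < x) :
    1 < t ^ (-(1 / 3) : ℝ) * x := by
  rwa [← div_rpow_one_third ht, one_lt_div (Real.rpow_pos_of_pos ht _)]

theorem IsPhys.toReal_eLpNorm_six_pow_three_le (hu : IsPhys w t u) (hw : MemE w) (ht : 0 < t) :
    (eLpNorm u 6 volume).toReal ^ 3 ≤
      (616 * (eLpNorm (fun y => (japRoot y)⁻¹) 6 volume).toReal) ^ 3 * t ^ (-(5 / 6) : ℝ) *
        EnormP t w ^ 3 := by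
  have hh : 0 < t ^ (-(1 / 3) : ℝ) := Real.rpow_pos_of_pos ht _
  have hpow : (t ^ (-(1 / 3) : ℝ)) ^ 3 * ((t ^ (-(1 / 3) : ℝ)) ^ (-(1 / 6) : ℝ)) ^ 3 =
      t ^ (-(5 / 6) : ℝ) := by
    rw [← Real.rpow_mul_natCast ht.le, ← Real.rpow_mul ht.le, ← Real.rpow_mul_natCast ht.le,
      ← Real.rpow_add ht]
    norm_num
  refine (pow_le_pow_left₀ ENNReal.toReal_nonneg (toReal_eLpNorm_six_le hh
    (hu.abs_le hw hh (mul_rpow_neg_one_third_pow_three ht))) 3).trans_eq ?_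
  rw [← hpow]
  ring

theorem IsPhys.abs_mul_deriv_le (hu : IsPhys w t u) (hw : MemE w) (ht : 0 < t) (x : ℝ) :
    |u x * deriv u x| ≤ 616 ^ 2 * t⁻¹ * EnormP t w ^ 2 := by
  have hh : 0 < t ^ (-(1 / 3) : ℝ) := Real.rpow_pos_of_pos ht _
  have hth := mul_rpow_neg_one_third_pow_three ht
  set h := t ^ (-(1 / 3) : ℝ)
  have hj := japRoot_pos (h * x)
  have hux := hu.abs_le hw hh hth x
  calc |u x * deriv u x| ≤ 616 * h * EnormP t w / japRoot (h * x) *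
        (616 * h ^ 2 * EnormP t w * japRoot (h * x)) := by
        rw [abs_mul]
        exact mul_le_mul hux (hu.abs_deriv_le hw hh hth x) (abs_nonneg _)
          ((abs_nonneg _).trans hux)
    _ = 616 ^ 2 * t⁻¹ * EnormP t w ^ 2 := by
        rw [inv_eq_of_mul_eq_one_right hth]
        field_simp

theorem IsPhys.abs_le_of_rpow_lt (hu : IsPhys w t u) (hw : MemE w) (ht : 0 < t)
    (hx : t ^ (1 / 3 : ℝ) < x) :
    |u x| ≤ 300 * t ^ (-(1 / 3) : ℝ) * jap (x / t ^ (1 / 3 : ℝ)) ^ (-(3 / 4) : ℝ) *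
      EnormP t w := by
  refine (hu.abs_le_of_one_le hw (Real.rpow_pos_of_pos ht _) (mul_rpow_neg_one_third_pow_three ht)
    (one_lt_rpow_neg_one_third_mul ht hx).le).trans_eq ?_
  rw [div_rpow_one_third ht, ← Nat.cast_three, jap_rpow_neg_div_four]
  ring

theorem IsPhys.abs_deriv_le_of_rpow_lt (hu : IsPhys w t u) (hw : MemE w) (ht : 0 < t)
    (hx : t ^ (1 / 3 : ℝ) < x) :
    |deriv u x| ≤ 300 * t ^ (-(2 / 3) : ℝ) * jap (x / t ^ (1 / 3 : ℝ)) ^ (-(1 / 4) : ℝ) *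
      EnormP t w := by
  have hpow : (t ^ (-(1 / 3) : ℝ)) ^ 2 = t ^ (-(2 / 3) : ℝ) := by
    rw [← Real.rpow_mul_natCast ht.le]
    norm_num
  refine (hu.abs_deriv_le_of_one_lt hw (Real.rpow_pos_of_pos ht _)
    (mul_rpow_neg_one_third_pow_three ht) (one_lt_rpow_neg_one_third_mul ht hx)).trans_eq ?_
  rw [div_rpow_one_third ht, hpow, show (1 / 4 : ℝ) = (1 : ℕ) / 4 by norm_num,
    jap_rpow_neg_div_four]
  ring

end Decay

/-- improved decay on the right and integrated bounds. -/
theorem improved_decay :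
    ∃ C : ℝ, 0 < C ∧
    ∀ t : ℝ, 0 < t → ∀ w : ℝ → ℂ, MemE w →
    ∀ u : ℝ → ℝ, IsPhys w t u →
      ((eLpNorm u 6 (volume : Measure ℝ)).toReal ^ 3 ≤ C * t ^ (-(5 / 6 : ℝ)) * EnormP t w ^ 3) ∧
      (∀ x : ℝ, |u x * deriv u x| ≤ C * t⁻¹ * EnormP t w ^ 2) ∧
      (∀ x : ℝ, t ^ (1 / 3 : ℝ) < x →
        |u x| ≤ C * t ^ (-(1 / 3 : ℝ)) * jap (x / t ^ (1 / 3 : ℝ)) ^ (-(3 / 4 : ℝ)) *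
          EnormP t w ∧
        |deriv u x| ≤ C * t ^ (-(2 / 3 : ℝ)) * jap (x / t ^ (1 / 3 : ℝ)) ^ (-(1 / 4 : ℝ)) *
          EnormP t w) := by
  obtain ⟨C, hL6, hC⟩ :
      ∃ C, (616 * (eLpNorm (fun y => (japRoot y)⁻¹) 6 volume).toReal) ^ 3 ≤ C ∧ 616 ^ 2 ≤ C :=
    ⟨_, le_max_left _ _, le_max_right _ _⟩
  have hC' : 300 ≤ C := by linarith
  refine ⟨C, by linarith, fun t ht w hw u hu => ?_⟩
  have hE := hw.EnormP_nonneg ht.le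
  refine ⟨?_, fun x => ?_, fun x hx => ?_⟩
  · exact (hu.toReal_eLpNorm_six_pow_three_le hw ht).trans (by gcongr)
  · exact (hu.abs_mul_deriv_le hw ht x).trans (by gcongr)
  have hj := zero_le_one.trans (one_le_jap (x / t ^ (1 / 3 : ℝ)))
  exact ⟨(hu.abs_le_of_rpow_lt hw ht hx).trans (by gcongr),
    (hu.abs_deriv_le_of_rpow_lt hw ht hx).trans (by gcongr)⟩

end MKdVPaper
end
end

section
/- There exists a sequence (χ_n)_{n∈ℕ} of even Schwartz functions on ℝ such that: for all n, 0 < χ_n ≤ 1 and χ_n^{1/2} is a Schwartz function; χ_n(p) → 1 as n → ∞ for every p ∈ ℝ; each χ_n is decreasing on [0, ∞); and sup_{p∈ℝ} |p (χ_n^{1/2})'(p)| → 0 as n → ∞. -/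
open MeasureTheory Set Filter Topology

noncomputable section

namespace MKdVPaper

/-!
The cut-offs are `χ = exp (2 (1 - ⟨x⟩ ^ (2 s)))` with `⟨x⟩² = 1 + ‖x‖²` and `s ↘ 0`, so that
`χ^{1/2} = exp (1 - u)` where `u = ⟨x⟩ ^ (2 s)`. The radial derivative of `u` is at most `2 s u`,
and `u exp (1 - u) ≤ 1`, so that of `χ^{1/2}` is at most `2 s`. Stretched exponentials are Schwartz
because `u` has temperate growth while `exp (-u)` beats every polynomial.
-/

open scoped SchwartzMap Nat

section ExpComp

variable {E : Type*} [NormedAddCommGroup E] [NormedSpace ℝ E] {f : E → ℝ}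

lemma norm_iteratedFDeriv_real_exp (n : ℕ) (t : ℝ) :
    ‖iteratedFDeriv ℝ n Real.exp t‖ = Real.exp t := by
  rw [norm_iteratedFDeriv_eq_norm_iteratedDeriv, iteratedDeriv_eq_iterate, Real.iter_deriv_exp,
    Real.norm_eq_abs, Real.abs_exp]

lemma exists_norm_iteratedFDeriv_exp_comp_le (hf : f.HasTemperateGrowth) (n : ℕ) :
    ∃ (m : ℕ) (C : ℝ), 0 ≤ C ∧ ∀ x,
      ‖iteratedFDeriv ℝ n (fun x ↦ Real.exp (f x)) x‖ ≤ C * ((1 + ‖x‖) ^ m * Real.exp (f x)) := by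
  obtain ⟨k, C, hC, hbound⟩ := hf.norm_iteratedFDeriv_le_uniform n
  refine ⟨k * n, n ! * (1 + C) ^ n, by positivity, fun x ↦ ?_⟩
  set D : ℝ := (1 + C) * (1 + ‖x‖) ^ k with hD
  have one_le_pow : 1 ≤ (1 + ‖x‖) ^ k := one_le_pow₀ (by simp)
  have one_le_D : 1 ≤ D := one_le_mul_of_one_le_of_one_le (by simpa using hC) one_le_pow
  have hf_le (i : ℕ) (hi : 1 ≤ i) (hin : i ≤ n) : ‖iteratedFDeriv ℝ i f x‖ ≤ D ^ i :=
    calc ‖iteratedFDeriv ℝ i f x‖ ≤ C * (1 + ‖x‖) ^ k := hbound i hin x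
      _ ≤ D := by rw [hD]; gcongr; simp
      _ ≤ D ^ i := le_self_pow₀ one_le_D (by lia)
  calc ‖iteratedFDeriv ℝ n (Real.exp ∘ f) x‖ ≤ n ! * Real.exp (f x) * D ^ n :=
        norm_iteratedFDeriv_comp_le Real.contDiff_exp hf.1 (mod_cast le_top) x
          (fun i _ ↦ (norm_iteratedFDeriv_real_exp i _).le) hf_le
    _ = n ! * (1 + C) ^ n * ((1 + ‖x‖) ^ (k * n) * Real.exp (f x)) := by
        rw [hD, mul_pow, ← pow_mul]; ring

/-- The function `exp ∘ f` as a Schwartz function, for `f` of temperate growth such that `exp ∘ f`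
itself, with no condition on its derivatives, is rapidly decreasing. -/
def expSchwartzMap (f : E → ℝ) (hf : f.HasTemperateGrowth)
    (hdecay : ∀ k : ℕ, ∃ C, ∀ x, (1 + ‖x‖) ^ k * Real.exp (f x) ≤ C) : 𝓢(E, ℝ) where
  toFun x := Real.exp (f x)
  smooth' := hf.1.exp
  decay' k n := by
    obtain ⟨m, A, hA, hderiv⟩ := exists_norm_iteratedFDeriv_exp_comp_le hf n
    obtain ⟨B, hB⟩ := hdecay (k + m)
    refine ⟨A * B, fun x ↦ ?_⟩
    calc ‖x‖ ^ k * ‖iteratedFDeriv ℝ n (fun x ↦ Real.exp (f x)) x‖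
        ≤ (1 + ‖x‖) ^ k * (A * ((1 + ‖x‖) ^ m * Real.exp (f x))) := by
          gcongr
          · simp
          · exact hderiv x
      _ = A * ((1 + ‖x‖) ^ (k + m) * Real.exp (f x)) := by rw [pow_add]; ring
      _ ≤ A * B := by gcongr; exact hB x

end ExpComp

lemma pow_le_mul_exp_mul_rpow {c s y : ℝ} (hc : 0 < c) (hs : 0 < s) (hy : 1 ≤ y) (k : ℕ) :
    y ^ k ≤ ⌈k / s⌉₊ ! / c ^ ⌈k / s⌉₊ * Real.exp (c * y ^ s) := by
  set m := ⌈k / s⌉₊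
  have hks : (k : ℝ) ≤ s * m := by
    rw [mul_comm, ← div_le_iff₀ hs]
    exact Nat.le_ceil _
  have hpow : y ^ k ≤ (y ^ s) ^ m := by
    rw [← Real.rpow_natCast, ← Real.rpow_mul_natCast (by linarith)]
    exact Real.rpow_le_rpow_of_exponent_le hy hks
  have hexp : (c * y ^ s) ^ m / m ! ≤ Real.exp (c * y ^ s) :=
    Real.pow_div_factorial_le_exp _ (by positivity) m
  calc y ^ k ≤ m ! / c ^ m * ((c * y ^ s) ^ m / m !) := by
        rw [mul_pow]; field_simp; exact hpow
    _ ≤ m ! / c ^ m * Real.exp (c * y ^ s) := by gcongr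

lemma exists_one_add_norm_pow_mul_exp_le {E : Type*} [SeminormedAddGroup E] {c s : ℝ}
    (hc : 0 < c) (hs : 0 < s) (k : ℕ) :
    ∃ C, ∀ x : E, (1 + ‖x‖) ^ k * Real.exp (c * (1 - (1 + ‖x‖ ^ 2) ^ s)) ≤ C := by
  refine ⟨2 ^ k * (⌈k / s⌉₊ ! / c ^ ⌈k / s⌉₊) * Real.exp c, fun x ↦ ?_⟩
  have hnorm : 1 + ‖x‖ ≤ 2 * (1 + ‖x‖ ^ 2) := by nlinarith [sq_nonneg (‖x‖ - 1)]
  set u := (1 + ‖x‖ ^ 2) ^ s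
  calc (1 + ‖x‖) ^ k * Real.exp (c * (1 - u))
      ≤ (2 * (1 + ‖x‖ ^ 2)) ^ k * Real.exp (c * (1 - u)) := by gcongr
    _ ≤ 2 ^ k * (⌈k / s⌉₊ ! / c ^ ⌈k / s⌉₊ * Real.exp (c * u)) * Real.exp (c * (1 - u)) := by
        rw [mul_pow]
        gcongr
        exact pow_le_mul_exp_mul_rpow hc hs (by simp) k
    _ = 2 ^ k * (⌈k / s⌉₊ ! / c ^ ⌈k / s⌉₊) * Real.exp c := by
        rw [← mul_assoc, mul_assoc, ← Real.exp_add]; ring_nf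

section StretchedExp

variable {H : Type*} [NormedAddCommGroup H] [InnerProductSpace ℝ H] {c s : ℝ}

variable (H) in
/-- The stretched exponential `exp (c (1 - ⟨x⟩ ^ (2 s)))`, where `⟨x⟩² = 1 + ‖x‖²`, as a Schwartz
function; it is normalised to be `1` at the origin. -/
def stretchedExp (hc : 0 < c) (hs : 0 < s) : 𝓢(H, ℝ) :=
  expSchwartzMap (fun x ↦ c * (1 - (1 + ‖x‖ ^ 2) ^ s))
    (.mul (.const c) (.sub (.const 1) (Function.hasTemperateGrowth_one_add_norm_sq_rpow H s)))
    (exists_one_add_norm_pow_mul_exp_le hc hs)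

lemma stretchedExp_apply (hc : 0 < c) (hs : 0 < s) (x : H) :
    stretchedExp H hc hs x = Real.exp (c * (1 - (1 + ‖x‖ ^ 2) ^ s)) := rfl

lemma stretchedExp_half_eq_sqrt (hc : 0 < c) (hs : 0 < s) (x : H) :
    stretchedExp H (half_pos hc) hs x = √(stretchedExp H hc hs x) := by
  simp only [stretchedExp_apply, ← Real.exp_half]
  ring_nf

lemma stretchedExp_pos (hc : 0 < c) (hs : 0 < s) (x : H) : 0 < stretchedExp H hc hs x :=
  Real.exp_pos _

lemma stretchedExp_le_of_norm_le (hc : 0 < c) (hs : 0 < s) {x y : H} (hxy : ‖x‖ ≤ ‖y‖) :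
    stretchedExp H hc hs y ≤ stretchedExp H hc hs x := by
  simp only [stretchedExp_apply]
  gcongr

lemma stretchedExp_le_one (hc : 0 < c) (hs : 0 < s) (x : H) : stretchedExp H hc hs x ≤ 1 := by
  have h : stretchedExp H hc hs x ≤ stretchedExp H hc hs 0 :=
    stretchedExp_le_of_norm_le hc hs (by simp)
  simpa [stretchedExp_apply] using h

lemma tendsto_stretchedExp {ι : Type*} {l : Filter ι} {s : ι → ℝ} (hc : 0 < c) (hs : ∀ i, 0 < s i)
    (hs₀ : Tendsto s l (𝓝 0)) (x : H) :
    Tendsto (fun i ↦ stretchedExp H hc (hs i) x) l (𝓝 1) := by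
  have hpow : Tendsto (fun i ↦ (1 + ‖x‖ ^ 2) ^ s i) l (𝓝 1) := by
    simpa using tendsto_const_nhds.rpow hs₀ (.inl (by positivity : 1 + ‖x‖ ^ 2 ≠ 0))
  simpa [stretchedExp_apply] using ((hpow.const_sub 1).const_mul c).rexp

lemma hasFDerivAt_stretchedExp (hc : 0 < c) (hs : 0 < s) (x : H) :
    HasFDerivAt (stretchedExp H hc hs)
      (-(2 * c * s * (1 + ‖x‖ ^ 2) ^ (s - 1) * stretchedExp H hc hs x) • innerSL ℝ x) x := by
  have hsq : HasFDerivAt (fun x : H ↦ 1 + ‖x‖ ^ 2) (2 • innerSL ℝ x) x :=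
    (hasStrictFDerivAt_norm_sq x).hasFDerivAt.const_add 1
  have hexp := (((hsq.rpow_const (p := s) (.inl (by positivity))).const_sub 1).const_mul c).exp
  refine hexp.congr_fderiv ?_
  simp only [stretchedExp_apply]
  module

lemma norm_mul_norm_fderiv_stretchedExp_le (hc : 0 < c) (hs : 0 < s) (x : H) :
    ‖x‖ * ‖fderiv ℝ (stretchedExp H hc hs) x‖ ≤ 2 * s * Real.exp (c - 1) := by
  set u := (1 + ‖x‖ ^ 2) ^ s with hu
  have hradial : ‖x‖ ^ 2 * (1 + ‖x‖ ^ 2) ^ (s - 1) ≤ u := by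
    rw [Real.rpow_sub_one (by positivity), ← hu, mul_div_assoc', div_le_iff₀ (by positivity)]
    nlinarith [show 0 ≤ u by positivity]
  rw [(hasFDerivAt_stretchedExp hc hs x).fderiv, norm_smul, innerSL_apply_norm, norm_neg,
    Real.norm_of_nonneg (by have := stretchedExp_pos hc hs x; positivity), stretchedExp_apply]
  calc ‖x‖ * (2 * c * s * (1 + ‖x‖ ^ 2) ^ (s - 1) * Real.exp (c * (1 - u)) * ‖x‖)
      = 2 * s * (c * (‖x‖ ^ 2 * (1 + ‖x‖ ^ 2) ^ (s - 1)) * Real.exp (c * (1 - u))) := by ring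
    _ ≤ 2 * s * (c * u * Real.exp (c * (1 - u))) := by gcongr
    _ = 2 * s * (c * u * Real.exp (-(c * u)) * Real.exp c) := by
        rw [mul_assoc _ _ (Real.exp c), ← Real.exp_add]; ring_nf
    _ ≤ 2 * s * (Real.exp (-1) * Real.exp c) := by
        gcongr; exact Real.mul_exp_neg_le_exp_neg_one _
    _ = 2 * s * Real.exp (c - 1) := by rw [← Real.exp_add]; ring_nf

end StretchedExp

theorem cutoff_sequence_exists_general (H : Type*) [NormedAddCommGroup H] [InnerProductSpace ℝ H] :
    ∃ χ : ℕ → 𝓢(H, ℝ), ∃ ρ : ℕ → 𝓢(H, ℝ),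
      (∀ n x, ρ n x = √(χ n x)) ∧
      (∀ n x, 0 < χ n x ∧ χ n x ≤ 1) ∧
      (∀ n x y, ‖x‖ ≤ ‖y‖ → χ n y ≤ χ n x) ∧
      (∀ x, Tendsto (fun n ↦ χ n x) atTop (𝓝 1)) ∧
      (∀ η : ℝ, 0 < η → ∃ N : ℕ, ∀ n ≥ N, ∀ x, ‖x‖ * ‖fderiv ℝ (ρ n) x‖ ≤ η) := by
  have hs (n : ℕ) : 0 < 1 / ((n : ℝ) + 1) := Nat.one_div_pos_of_nat
  have hs₀ : Tendsto (fun n : ℕ ↦ 1 / ((n : ℝ) + 1)) atTop (𝓝 0) :=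
    tendsto_one_div_add_atTop_nhds_zero_nat
  refine ⟨fun n ↦ stretchedExp H two_pos (hs n), fun n ↦ stretchedExp H (half_pos two_pos) (hs n),
    fun n ↦ stretchedExp_half_eq_sqrt two_pos (hs n),
    fun n x ↦ ⟨stretchedExp_pos two_pos (hs n) x, stretchedExp_le_one two_pos (hs n) x⟩,
    fun n x y ↦ stretchedExp_le_of_norm_le two_pos (hs n),
    tendsto_stretchedExp two_pos hs hs₀, fun η hη ↦ ?_⟩
  obtain ⟨N, hN⟩ := eventually_atTop.1 (hs₀.eventually_le_const (half_pos hη))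
  refine ⟨N, fun n hn x ↦ ?_⟩
  calc ‖x‖ * ‖fderiv ℝ (stretchedExp H (half_pos two_pos) (hs n)) x‖
      ≤ 2 * (1 / ((n : ℝ) + 1)) * Real.exp (2 / 2 - 1) :=
        norm_mul_norm_fderiv_stretchedExp_le _ (hs n) x
    _ = 2 * (1 / ((n : ℝ) + 1)) := by norm_num
    _ ≤ η := by linarith [hN n hn]

/-- existence of the cut-off sequence `χ_n`. -/
theorem cutoff_sequence_exists :
    ∃ χ : ℕ → SchwartzMap ℝ ℝ, ∃ ρ : ℕ → SchwartzMap ℝ ℝ,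
      (∀ n : ℕ, ∀ p : ℝ, ρ n p = Real.sqrt (χ n p)) ∧
      (∀ n : ℕ, ∀ p : ℝ, 0 < χ n p ∧ χ n p ≤ 1) ∧
      (∀ n : ℕ, ∀ p : ℝ, χ n (-p) = χ n p) ∧
      (∀ n : ℕ, AntitoneOn (fun p => χ n p) (Ici 0)) ∧
      (∀ p : ℝ, Tendsto (fun n => χ n p) atTop (𝓝 1)) ∧
      (∀ η : ℝ, 0 < η → ∃ N : ℕ, ∀ n ≥ N, ∀ p : ℝ,
        |p * deriv (fun q => ρ n q) p| ≤ η) := by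
  obtain ⟨χ, ρ, hsqrt, hbounds, hanti, hlim, hderiv⟩ := cutoff_sequence_exists_general ℝ
  refine ⟨χ, ρ, hsqrt, hbounds,
    fun n p ↦ (hanti n _ _ (norm_neg p).ge).antisymm (hanti n _ _ (norm_neg p).le),
    fun n p hp q _ hpq ↦ hanti n p q (abs_le_abs_of_nonneg hp hpq), hlim, ?_⟩
  simpa only [← Real.norm_eq_abs, norm_mul, norm_deriv_eq_norm_fderiv] using hderiv

end MKdVPaper
end
end
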